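/- Let V be a finite set, 1 ≤ s, 2s ≤ r, and E_r a finite set of subsets of V each of cardinality exactly r, such that any two disjoint s-element subsets of V are contained in at most one common hyperedge. Suppose moreover that |V_G| ≤ 2 · C(r,s) · |E_r| (this holds automatically whenever s ≤ 2), and that V_G and E_G are nonempty. Then the second spectral moment m_2 = (1/|V_G|) Σ_{x ∈ V_G} (P²)_{xx} satisfies the lower bound m_2 ≥ (1/(2·C(r−s,s))) · (1/|E_G|) · Σ_{{x,y} ∈ E_G} 1/(D_[x] · D_[y]). -/

import Mathlib

/-!
The trace of `P²` is `∑ w(x,y) w(y,x) / (d_x d_y)`. Since `w` takes only the values `0` and `1`,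
this is the sum of `1 / (d_x d_y)` over oriented edges, i.e. twice the sum over `E_G`
(`sum_orientedEdges`). Counting the tuples inside each hyperedge gives
`d_x = D_[x] · s! · C(r-s,s)` (`deg_eq`), so with `S = ∑_{E_G} 1 / (D_[x] D_[y])` the second moment
equals `2 S / (|V_G| (s! C(r-s,s))²)`.

On the other hand `2 |E_G| = ∑ d_x = |E_r| · s! C(r,s) · s! C(r-s,s)` by the handshake identity and
`sum_Dset`. After substituting this, the claimed inequality is precisely the hypothesis
`|V_G| ≤ 2 C(r,s) |E_r|`.
-/

open Finset

/-- The underlying vertex set `[x]` of an injective `s`-tuple `x : Fin s ↪ V`. -/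
def tset {V : Type*} {s : ℕ} (x : Fin s ↪ V) : Finset V := Finset.univ.map x

/-- `D_A`: the number of hyperedges of `E_r` containing the set `A`. -/
def Dset {V : Type*} [DecidableEq V] (Er : Finset (Finset V)) (A : Finset V) : ℕ :=
  (Er.filter fun e => A ⊆ e).card

/-- The edge weight `w(x,y)` of the transformed graph `G^(s)`: the number of hyperedges
containing `[x] ∪ [y]` when `[x]` and `[y]` are disjoint, and `0` otherwise. -/
def wgt {V : Type*} [DecidableEq V] {s : ℕ} (Er : Finset (Finset V))
    (x y : Fin s ↪ V) : ℕ :=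
  if Disjoint (tset x) (tset y) then (Er.filter fun e => tset x ∪ tset y ⊆ e).card else 0

/-- The degree `d_x = ∑_y w(x,y)` of `x` in the transformed graph `G^(s)`. -/
noncomputable def deg {V : Type*} [Fintype V] [DecidableEq V] {s : ℕ}
    (Er : Finset (Finset V)) (x : Fin s ↪ V) : ℕ :=
  ∑ y : Fin s ↪ V, wgt Er x y

/-- The vertex set `V_G = {x : D_[x] ≥ 1}` of injective `s`-tuples appearing in at
least one hyperedge. -/
noncomputable def VG (V : Type*) [Fintype V] [DecidableEq V] (Er : Finset (Finset V))
    (s : ℕ) : Finset (Fin s ↪ V) :=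
  Finset.univ.filter fun x => 1 ≤ Dset Er (tset x)

/-- The edge set `E_G` of the transformed graph `G^(s)`: unordered pairs `{x,y}` of
vertices of `V_G` with `w(x,y) = 1`. -/
noncomputable def EG (V : Type*) [Fintype V] [DecidableEq V] (Er : Finset (Finset V))
    (s : ℕ) : Finset (Finset (Fin s ↪ V)) :=
  Finset.image (fun q : (Fin s ↪ V) × (Fin s ↪ V) => {q.1, q.2})
    ((Finset.univ ×ˢ Finset.univ).filter fun q =>
      q.1 ∈ VG V Er s ∧ q.2 ∈ VG V Er s ∧ wgt Er q.1 q.2 = 1)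

/-- The injective `s`-tuples with all entries in a set `A` number `|A| (|A|-1) ⋯ (|A|-s+1)`. -/
lemma card_tset_subset {V : Type*} [Fintype V] [DecidableEq V] {s : ℕ} (A : Finset V) :
    (Finset.univ.filter fun y : Fin s ↪ V => tset y ⊆ A).card = A.card.descFactorial s := by
  have h := Fintype.card_embedding_eq (α := Fin s) (β := A)
  rw [Fintype.card_coe, Fintype.card_fin] at h
  rw [← h, ← Finset.card_univ]
  symm
  refine Finset.card_bij (fun f _ => f.trans (Function.Embedding.subtype _)) ?_ ?_ ?_
  · intro f _
    refine Finset.mem_filter.2 ⟨Finset.mem_univ _, fun v hv => ?_⟩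
    obtain ⟨i, -, rfl⟩ := Finset.mem_map.1 hv
    exact (f i).2
  · intro f _ g _ hfg
    ext i
    exact congrArg (fun k : Fin s ↪ V => k i) hfg
  · intro y hy
    replace hy := (Finset.mem_filter.1 hy).2
    refine ⟨⟨fun i => ⟨y i, hy (Finset.mem_map_of_mem _ (Finset.mem_univ i))⟩, ?_⟩,
      Finset.mem_univ _, ?_⟩
    · intro i j hij
      exact y.injective (congrArg Subtype.val hij)
    · ext i
      rfl

lemma card_tset {V : Type*} {s : ℕ} (x : Fin s ↪ V) : (tset x).card = s := by
  simp [tset]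

lemma wgt_comm {V : Type*} [DecidableEq V] {s : ℕ} (Er : Finset (Finset V))
    (x y : Fin s ↪ V) : wgt Er x y = wgt Er y x := by
  unfold wgt
  simp only [disjoint_comm, Finset.union_comm]

lemma wgt_self {V : Type*} [DecidableEq V] {s : ℕ} (hs : 1 ≤ s) (Er : Finset (Finset V))
    (x : Fin s ↪ V) : wgt Er x x = 0 := by
  unfold wgt
  rw [if_neg]
  intro h
  have h0 : tset x = ∅ := by simpa using h
  have := card_tset x
  rw [h0, Finset.card_empty] at this
  omega

lemma one_le_Dset_of_wgt {V : Type*} [DecidableEq V] {s : ℕ} {Er : Finset (Finset V)}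
    {x y : Fin s ↪ V} (h : wgt Er x y = 1) : 1 ≤ Dset Er (tset x) := by
  unfold wgt at h
  split_ifs at h
  rw [← h]
  exact Finset.card_le_card (Finset.monotone_filter_right _
    fun e _ he => Finset.union_subset_left he)

/-- Every hyperedge `e ⊇ [x]` contributes to `d_x` the tuples in `e \ [x]`, so
`d_x = D_[x] · s! · C(r-s,s)`. -/
lemma deg_eq {V : Type*} [Fintype V] [DecidableEq V] {r s : ℕ}
    {Er : Finset (Finset V)} (hcard : ∀ e ∈ Er, e.card = r) (x : Fin s ↪ V) :
    deg Er x = Dset Er (tset x) * (r - s).descFactorial s := by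
  have hw : ∀ y : Fin s ↪ V, wgt Er x y =
      ∑ e ∈ Er.filter (fun e => tset x ⊆ e), if tset y ⊆ e \ tset x then 1 else 0 := by
    intro y
    rw [← Finset.card_filter, Finset.filter_filter]
    unfold wgt
    split_ifs with hd
    · congr 1
      refine Finset.filter_congr fun e _ => ?_
      rw [Finset.union_subset_iff, Finset.subset_sdiff]
      simp [hd.symm]
    · symm
      rw [Finset.card_eq_zero, Finset.filter_eq_empty_iff]
      rintro e - ⟨-, h⟩
      exact hd (Finset.subset_sdiff.1 h).2.symm
  unfold deg
  simp_rw [hw]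
  rw [Finset.sum_comm, Dset, ← smul_eq_mul, ← Finset.sum_const]
  refine Finset.sum_congr rfl fun e he => ?_
  obtain ⟨he, hx⟩ := Finset.mem_filter.1 he
  rw [← Finset.card_filter, card_tset_subset, Finset.card_sdiff_of_subset hx, hcard e he,
    card_tset]

lemma sum_Dset {V : Type*} [Fintype V] [DecidableEq V] {r : ℕ} (s : ℕ)
    {Er : Finset (Finset V)} (hcard : ∀ e ∈ Er, e.card = r) :
    ∑ x : Fin s ↪ V, Dset Er (tset x) = Er.card * r.descFactorial s := by
  unfold Dset
  simp_rw [Finset.card_filter]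
  rw [Finset.sum_comm, ← smul_eq_mul, ← Finset.sum_const]
  refine Finset.sum_congr rfl fun e he => ?_
  rw [← Finset.card_filter, card_tset_subset, hcard e he]

/-- The orientations of the edges of `G^(s)`: ordered pairs `(x,y)` in `V_G` with
`w(x,y) = 1`. -/
noncomputable def orientedEdges (V : Type*) [Fintype V] [DecidableEq V]
    (Er : Finset (Finset V)) (s : ℕ) : Finset ((Fin s ↪ V) × (Fin s ↪ V)) :=
  (Finset.univ ×ˢ Finset.univ).filter fun q =>
    q.1 ∈ VG V Er s ∧ q.2 ∈ VG V Er s ∧ wgt Er q.1 q.2 = 1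

lemma mem_orientedEdges {V : Type*} [Fintype V] [DecidableEq V] {Er : Finset (Finset V)}
    {s : ℕ} {q : (Fin s ↪ V) × (Fin s ↪ V)} :
    q ∈ orientedEdges V Er s ↔ wgt Er q.1 q.2 = 1 := by
  simp only [orientedEdges, VG, Finset.mem_filter, Finset.mem_product, Finset.mem_univ, true_and]
  refine ⟨fun h => h.2.2, fun h => ⟨one_le_Dset_of_wgt h, ?_, h⟩⟩
  rw [wgt_comm] at h
  exact one_le_Dset_of_wgt h

/-- There are no loops (this uses `1 ≤ s`), so each unordered edge has exactly two
orientations. -/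
lemma sum_orientedEdges {V : Type*} [Fintype V] [DecidableEq V] {s : ℕ} (hs : 1 ≤ s)
    (Er : Finset (Finset V)) (g : Finset (Fin s ↪ V) → ℝ) :
    ∑ q ∈ orientedEdges V Er s, g {q.1, q.2} = 2 * ∑ t ∈ EG V Er s, g t := by
  have hmaps : ∀ q ∈ orientedEdges V Er s, ({q.1, q.2} : Finset (Fin s ↪ V)) ∈ EG V Er s :=
    fun q hq => Finset.mem_image_of_mem _ hq
  rw [← Finset.sum_fiberwise_of_maps_to hmaps, Finset.mul_sum]
  refine Finset.sum_congr rfl fun t ht => ?_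
  obtain ⟨⟨a, b⟩, hab, rfl⟩ := Finset.mem_image.1 ht
  have hw : wgt Er a b = 1 := mem_orientedEdges.1 hab
  have hne : a ≠ b := by
    rintro rfl
    rw [wgt_self hs] at hw
    exact zero_ne_one hw
  have hfib : (orientedEdges V Er s).filter
      (fun q => ({q.1, q.2} : Finset (Fin s ↪ V)) = {a, b}) = {(a, b), (b, a)} := by
    ext ⟨c, d⟩
    simp only [Finset.mem_filter, mem_orientedEdges, Finset.mem_insert, Finset.mem_singleton,
      Prod.mk.injEq]
    constructor
    · rintro ⟨-, h⟩
      rw [← Finset.coe_inj] at h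
      push_cast at h
      exact Set.pair_eq_pair_iff.1 h
    · rintro (⟨rfl, rfl⟩ | ⟨rfl, rfl⟩)
      · exact ⟨hw, rfl⟩
      · exact ⟨by rw [wgt_comm]; exact hw, Finset.pair_comm _ _⟩
  rw [hfib, Finset.sum_pair (by simp [hne]), Finset.pair_comm b a, two_mul]

/-- If any two disjoint `s`-sets lie in at most one common hyperedge and
`|V_G| ≤ 2·C(r,s)·|E_r|`, then the second spectral moment is bounded below by
`(1/(2·C(r-s,s))) · E_{{x,y} ∈ E_G}[1/(D_[x]·D_[y])]`. -/
theorem second_moment_transformed_graph_lower_bound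
    (V : Type*) [Fintype V] [DecidableEq V]
    (r s : ℕ) (hs : 1 ≤ s) (hrs : 2 * s ≤ r)
    (Er : Finset (Finset V)) (hcard : ∀ e ∈ Er, e.card = r)
    (hlin : ∀ A B : Finset V, A.card = s → B.card = s → Disjoint A B →
      (Er.filter fun e => A ∪ B ⊆ e).card ≤ 1)
    (hVGle : (VG V Er s).card ≤ 2 * r.choose s * Er.card)
    (hVG : (VG V Er s).Nonempty) (hEG : (EG V Er s).Nonempty)
    (P : Matrix (VG V Er s) (VG V Er s) ℝ)
    (hP : ∀ x y, P x y = (wgt Er x.1 y.1 : ℝ) / (deg Er x.1 : ℝ)) :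
    (1 / ((VG V Er s).card : ℝ)) * ∑ x, (P ^ 2) x x ≥
      (1 / (2 * ((r - s).choose s : ℝ))) *
        ((1 / ((EG V Er s).card : ℝ)) *
          ∑ t ∈ EG V Er s, 1 / ∏ x ∈ t, (Dset Er (tset x) : ℝ)) := by
  have hw01 : ∀ x y : Fin s ↪ V, wgt Er x y = if wgt Er x y = 1 then 1 else 0 := by
    intro x y
    have h : wgt Er x y ≤ 1 := by
      unfold wgt
      split_ifs with hd
      · exact hlin _ _ (card_tset x) (card_tset y) hd
      · exact Nat.zero_le _
    split_ifs <;> omega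
  set N : ℕ := (r - s).descFactorial s with hN
  set S : ℝ := ∑ t ∈ EG V Er s, 1 / ∏ x ∈ t, (Dset Er (tset x) : ℝ) with hS
  have hS0 : 0 ≤ S := Finset.sum_nonneg fun t _ => by positivity
  have hne : ∀ q ∈ orientedEdges V Er s, q.1 ≠ q.2 := by
    intro q hq h
    have := mem_orientedEdges.1 hq
    rw [h, wgt_self hs] at this
    exact zero_ne_one this
  have htrace : ∑ x, (P ^ 2) x x = 2 * S / (N : ℝ) ^ 2 := by
    have hvan : ∀ x y : Fin s ↪ V, x ∉ VG V Er s → wgt Er x y ≠ 1 := by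
      intro x y hx h
      exact hx (Finset.mem_filter.2 ⟨Finset.mem_univ _, one_le_Dset_of_wgt h⟩)
    set F : (Fin s ↪ V) → (Fin s ↪ V) → ℝ := fun x y =>
      (wgt Er x y : ℝ) / deg Er x * ((wgt Er y x : ℝ) / deg Er y) with hF
    have hF' : ∀ x y, F x y =
        if wgt Er x y = 1 then
          1 / (∏ z ∈ ({x, y} : Finset (Fin s ↪ V)), (Dset Er (tset z) : ℝ)) / (N : ℝ) ^ 2
        else 0 := by
      intro x y
      simp only [hF]
      rw [wgt_comm Er y x]
      have h01 := hw01 x y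
      split_ifs with h
      · have hxy : x ≠ y := hne (x, y) (mem_orientedEdges.2 h)
        rw [Finset.prod_pair hxy, h, deg_eq hcard, deg_eq hcard]
        push_cast
        rw [div_mul_div_comm, div_div]
        congr 1 <;> ring
      · rw [if_neg h] at h01
        simp [h01]
    have h1 : ∑ x, (P ^ 2) x x = ∑ x ∈ VG V Er s, ∑ y ∈ VG V Er s, F x y := by
      rw [← Finset.sum_coe_sort (VG V Er s)]
      refine Finset.sum_congr rfl fun x _ => ?_
      rw [← Finset.sum_coe_sort (VG V Er s), pow_two, Matrix.mul_apply]
      refine Finset.sum_congr rfl fun y _ => ?_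
      rw [hP, hP]
    have h2 : ∑ x ∈ VG V Er s, ∑ y ∈ VG V Er s, F x y = ∑ x, ∑ y, F x y := by
      refine (Finset.sum_congr rfl fun x _ => ?_).trans
        (Finset.sum_subset (Finset.subset_univ _) fun x _ hx => ?_)
      · refine Finset.sum_subset (Finset.subset_univ _) fun y _ hy => ?_
        rw [hF', if_neg]
        rw [wgt_comm]
        exact hvan y x hy
      · refine Finset.sum_eq_zero fun y _ => ?_
        rw [hF', if_neg (hvan x y hx)]
    have h3 : ∑ x, ∑ y, F x y = ∑ q ∈ orientedEdges V Er s,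
        1 / (∏ z ∈ ({q.1, q.2} : Finset (Fin s ↪ V)), (Dset Er (tset z) : ℝ)) / (N : ℝ) ^ 2 := by
      simp_rw [hF']
      rw [← Fintype.sum_prod_type', ← Finset.sum_filter]
      refine Finset.sum_congr ?_ fun _ _ => rfl
      ext q
      simp [mem_orientedEdges]
    rw [h1, h2, h3, sum_orientedEdges hs Er
      (fun t => 1 / (∏ z ∈ t, (Dset Er (tset z) : ℝ)) / (N : ℝ) ^ 2), ← Finset.sum_div,
      mul_div_assoc]
  -- The handshake identity `2 |E_G| = ∑ d_x`.
  have hE : 2 * ((EG V Er s).card : ℝ) = (Er.card : ℝ) * r.descFactorial s * N := by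
    have h := sum_orientedEdges hs Er (fun _ => (1 : ℝ))
    simp only [Finset.sum_const, nsmul_eq_mul, mul_one] at h
    rw [← h]
    have hQ : (orientedEdges V Er s).card = ∑ x : Fin s ↪ V, deg Er x := by
      unfold deg
      rw [← Fintype.sum_prod_type', Finset.sum_congr rfl fun q _ => hw01 q.1 q.2,
        ← Finset.card_filter]
      congr 1
      ext q
      simp [mem_orientedEdges]
    rw [hQ, Finset.sum_congr rfl fun x _ => deg_eq hcard x, ← Finset.sum_mul, sum_Dset s hcard]
    push_cast
    rfl
  have hCpos : 0 < (r - s).choose s := Nat.choose_pos (by omega)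
  have hVpos : (0 : ℝ) < (VG V Er s).card := by exact_mod_cast hVG.card_pos
  have hEpos : (0 : ℝ) < (EG V Er s).card := by exact_mod_cast hEG.card_pos
  have hV : ((VG V Er s).card : ℝ) ≤ 2 * r.choose s * Er.card := by exact_mod_cast hVGle
  have hNeq : (N : ℝ) = s.factorial * (r - s).choose s := by
    rw [hN, Nat.descFactorial_eq_factorial_mul_choose]
    push_cast
    rfl
  rw [Nat.descFactorial_eq_factorial_mul_choose, hNeq] at hE
  rw [htrace, hNeq]
  push_cast at hE
  have hf : (0 : ℝ) < s.factorial := by exact_mod_cast s.factorial_pos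
  have hC : (0 : ℝ) < (r - s).choose s := by exact_mod_cast hCpos
  generalize ((r - s).choose s : ℝ) = C at *
  generalize (s.factorial : ℝ) = f at *
  generalize ((VG V Er s).card : ℝ) = v at *
  generalize ((EG V Er s).card : ℝ) = E at *
  -- Both sides are multiples of `S`; comparing the coefficients gives `v f² C ≤ 4 E`.
  have key : v * (f ^ 2 * C) ≤ 4 * E := by
    calc v * (f ^ 2 * C) ≤ 2 * r.choose s * Er.card * (f ^ 2 * C) := by gcongr
      _ = 4 * E := by linear_combination (-2) * hE
  have hL : 1 / v * (2 * S / (f * C) ^ 2) = 2 * S / C * (1 / (v * (f ^ 2 * C))) := by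
    field_simp
  have hR : 1 / (2 * C) * (1 / E * S) = 2 * S / C * (1 / (4 * E)) := by
    field_simp
    ring
  rw [ge_iff_le, hL, hR]
  gcongr
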